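/- Fix an interval [a,b] ⊆ [0,1], a real number c, a bounded upper semicontinuous function v : [0,1] → ℝ, and continuous functions ũ_1,…,ũ_n : [0,1] → ℝ. Consider the set 𝒟 of Borel probability measures G̃ on [0,1] such that G̃([a,b]) = 1, ∫_0^1 ũ_i dG̃ ≥ 0 for each i ∈ {1,…,n}, and ∫_a^b H_{G̃}(s) ds = c, where H_{G̃} denotes the CDF of G̃. If 𝒟 is nonempty, then the maximization of ∫_0^1 v dG̃ over 𝒟 admits a solution whose support is a finite set of cardinality at most n + 2. -/

import Mathlib

open MeasureTheory Set

/-- The constraint set `𝒟`: Borel probability measures on `[0,1]` giving full mass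
to `[a,b]`, satisfying the `n` side constraints, and whose CDF
`H(s) = G̃([0,s])` integrates to `c` over `[a,b]`. -/
def Dset (a b c : ℝ) {n : ℕ} (u : Fin n → ℝ → ℝ) : Set (Measure ℝ) :=
  {μ | IsProbabilityMeasure μ ∧ μ (Set.Icc a b) = 1 ∧
    (∀ i, 0 ≤ ∫ s in Set.Icc (0:ℝ) 1, u i s ∂μ) ∧
    (∫ s in a..b, (μ (Set.Icc 0 s)).toReal) = c}

lemma aux_isCompact_convexHull {E : Type} [NormedAddCommGroup E] [NormedSpace ℝ E]
    [FiniteDimensional ℝ E] {K : Set E} (hK : IsCompact K) : IsCompact (convexHull ℝ K) := by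
  classical
  set m := Module.finrank ℝ E + 1 with hm
  have hc : IsCompact (stdSimplex ℝ (Fin m) ×ˢ (Set.univ.pi fun _ : Fin m => K)) :=
    (isCompact_stdSimplex ℝ (Fin m)).prod (isCompact_univ_pi fun _ => hK)
  have himg := hc.image (f := fun p : (Fin m → ℝ) × (Fin m → E) => ∑ i, p.1 i • p.2 i)
    (by fun_prop)
  convert himg using 1
  ext x
  constructor
  · intro hx
    obtain ⟨ι, _, z, w, hz, hai, hw, hw1, hx⟩ := eq_pos_convex_span_of_mem_convexHull hx
    have hcard : Fintype.card ι ≤ Fintype.card (Fin m) := by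
      simpa using hai.card_le_finrank_succ.trans
        (Nat.succ_le_succ (Submodule.finrank_le _))
    obtain ⟨f⟩ := Function.Embedding.nonempty_of_card_le hcard
    have hne : Nonempty ι := by
      by_contra h
      rw [not_nonempty_iff] at h
      simp at hw1
    obtain ⟨i0⟩ := hne
    have hext : ∀ j, (∃ i, f i = j) ∨ (Function.extend f w 0 j = 0 ∧
        Function.extend f z (fun _ => z i0) j = z i0) := by
      intro j
      by_cases h : ∃ i, f i = j
      · exact Or.inl h
      · right
        constructor
        · rw [Function.extend_apply' _ _ _ h]; rfl
        · rw [Function.extend_apply' _ _ _ h]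
    refine ⟨(Function.extend f w 0, Function.extend f z (fun _ => z i0)), ⟨⟨?_, ?_⟩, ?_⟩, ?_⟩
    · intro j
      rcases hext j with ⟨i, rfl⟩ | h
      · simpa [f.injective.extend_apply] using (hw i).le
      · simp [h.1]
    · rw [← hw1]
      symm
      refine Finset.sum_of_injOn f f.injective.injOn (by simp) ?_ ?_
      · intro j _ hj
        rcases hext j with ⟨i, rfl⟩ | h
        · simp at hj
        · exact h.1
      · intro i _
        simp [f.injective.extend_apply]
    · intro j _
      rcases hext j with ⟨i, rfl⟩ | h
      · simpa [f.injective.extend_apply] using hz ⟨i, rfl⟩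
      · simpa [h.2] using hz ⟨i0, rfl⟩
    · rw [← hx]
      symm
      refine Finset.sum_of_injOn f f.injective.injOn (by simp) ?_ ?_
      · intro j _ hj
        rcases hext j with ⟨i, rfl⟩ | h
        · simp at hj
        · simp [h.1]
      · intro i _
        simp [f.injective.extend_apply]
  · rintro ⟨⟨w, z⟩, ⟨⟨hw0, hw1⟩, hz⟩, rfl⟩
    exact (convex_convexHull ℝ K).sum_mem (fun i _ => hw0 i) hw1
      (fun i _ => subset_convexHull ℝ K (hz i trivial))

lemma aux_restrict {a b : ℝ} (h0 : 0 ≤ a) (h1 : b ≤ 1) (μ : Measure ℝ)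
    [IsProbabilityMeasure μ] (hμ : μ (Icc a b) = 1) :
    (∀ᵐ x ∂μ, x ∈ Icc a b) ∧ μ.restrict (Icc 0 1) = μ := by
  have h : ∀ᵐ x ∂μ, x ∈ Icc a b := (mem_ae_iff_prob_eq_one measurableSet_Icc).2 hμ
  refine ⟨h, Measure.restrict_eq_self_of_ae_mem ?_⟩
  filter_upwards [h] with x hx
  exact ⟨h0.trans hx.1, hx.2.trans h1⟩

lemma aux_cdf {a b : ℝ} (h0 : 0 ≤ a) (hab : a ≤ b) (h1 : b ≤ 1) (μ : Measure ℝ)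
    [IsProbabilityMeasure μ] (hμ : μ (Icc a b) = 1) :
    (∫ s in a..b, (μ (Set.Icc 0 s)).toReal) = b - ∫ x, x ∂μ := by
  obtain ⟨hae, -⟩ := aux_restrict h0 h1 μ hμ
  have hint : Integrable (fun x : ℝ => x) μ := by
    refine Integrable.of_bound (by fun_prop) 1 ?_
    filter_upwards [hae] with x hx
    rw [Real.norm_eq_abs, abs_le]
    constructor <;> linarith [hx.1, hx.2]
  have hms : MeasurableSet {p : ℝ × ℝ | p.2 ≤ p.1} := measurableSet_le measurable_snd measurable_fst
  have e1 : ∀ s : ℝ, (μ (Icc 0 s)).toReal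
      = ∫ x, {p : ℝ × ℝ | p.2 ≤ p.1}.indicator (fun _ => (1:ℝ)) (s, x) ∂μ := by
    intro s
    have : μ (Icc 0 s) = μ (Iic s) := by
      apply measure_congr
      filter_upwards [hae] with x hx
      apply propext
      show x ∈ Icc 0 s ↔ x ∈ Iic s
      simp [h0.trans hx.1]
    rw [this]
    have : (fun x => {p : ℝ × ℝ | p.2 ≤ p.1}.indicator (fun _ => (1:ℝ)) (s, x))
      = (Iic s).indicator (fun _ => (1:ℝ)) := by
      ext x; simp [indicator]
    rw [this, integral_indicator measurableSet_Iic]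
    simp [Measure.real]
  simp_rw [e1]
  rw [intervalIntegral.integral_of_le hab, integral_integral_swap]
  · have e2 : ∀ᵐ x ∂μ, (∫ s in Ioc a b, {p : ℝ × ℝ | p.2 ≤ p.1}.indicator
        (fun _ => (1:ℝ)) (s, x)) = b - x := by
      filter_upwards [hae] with x hx
      have : (fun s => {p : ℝ × ℝ | p.2 ≤ p.1}.indicator (fun _ => (1:ℝ)) (s, x))
        = (Ici x).indicator (fun _ => (1:ℝ)) := by
        ext s; simp [indicator]
      rw [this, ← integral_Icc_eq_integral_Ioc, setIntegral_indicator measurableSet_Ici]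
      have : Icc a b ∩ Ici x = Icc x b := by
        ext s; simp only [mem_inter_iff, mem_Icc, mem_Ici]
        constructor
        · rintro ⟨⟨_, h⟩, h'⟩; exact ⟨h', h⟩
        · rintro ⟨h, h'⟩; exact ⟨⟨hx.1.trans h, h'⟩, h⟩
      rw [this]
      simp [hx.2]
    rw [integral_congr_ae e2, integral_sub (integrable_const _) hint]
    simp
  · refine Integrable.of_bound ?_ 1 ?_
    · exact (measurable_const.indicator hms).aestronglyMeasurable
    · refine Filter.Eventually.of_forall fun p => ?_
      simp only [Function.uncurry, indicator]
      split_ifs <;> simp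

lemma aux_card {E : Type} [NormedAddCommGroup E] [NormedSpace ℝ E]
    [FiniteDimensional ℝ E] {K : Set E} {ι : Type} [Fintype ι] {z : ι → E} {w : ι → ℝ}
    (hz : range z ⊆ K) (hai : AffineIndependent ℝ z) (hw : ∀ i, 0 < w i) (hw1 : ∑ i, w i = 1)
    (e : E) (hmax : ∀ ε > (0:ℝ), (∑ i, w i • z i) + ε • e ∉ convexHull ℝ K) :
    Fintype.card ι ≤ Module.finrank ℝ E := by
  by_contra hlt
  have hcard : Fintype.card ι ≤ Module.finrank ℝ E + 1 := 
    hai.card_le_finrank_succ.trans (Nat.succ_le_succ (Submodule.finrank_le _))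
  have hcard : Fintype.card ι = Module.finrank ℝ E + 1 := by omega
  have htop := hai.affineSpan_eq_top_iff_card_eq_finrank_add_one.2 hcard
  have hmem : (∑ i, w i • z i) + e ∈ affineSpan ℝ (range z) := by rw [htop]; trivial
  obtain ⟨d, hd1, hd⟩ := eq_affineCombination_of_mem_affineSpan_of_fintype hmem
  rw [Finset.affineCombination_eq_linear_combination _ _ _ hd1] at hd
  have hev : ∀ᶠ ε in nhdsWithin (0:ℝ) (Ioi 0), ∀ i, 0 < (1 - ε) * w i + ε * d i := by
    rw [Filter.eventually_all]
    intro i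
    apply Filter.Eventually.filter_mono nhdsWithin_le_nhds
    have : ContinuousAt (fun ε : ℝ => (1 - ε) * w i + ε * d i) 0 := by fun_prop
    exact this.eventually (lt_mem_nhds (by simpa using hw i))
  obtain ⟨ε, hε, hpos⟩ := (hev.and self_mem_nhdsWithin).exists
  refine hmax ε hpos ?_
  have : (∑ i, w i • z i) + ε • e = ∑ i, ((1 - ε) * w i + ε * d i) • z i := by
    have h2 : e = ∑ i, d i • z i - ∑ i, w i • z i := by rw [← hd]; abel
    simp_rw [add_smul, mul_smul, Finset.sum_add_distrib, ← Finset.smul_sum]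
    rw [h2]
    module
  rw [this]
  refine (convex_convexHull ℝ K).sum_mem (fun i _ => (hε i).le) ?_
    (fun i _ => subset_convexHull ℝ K (hz ⟨i, rfl⟩))
  rw [Finset.sum_add_distrib, ← Finset.mul_sum, ← Finset.mul_sum, hw1, hd1]
  ring

theorem stmt8 (a b : ℝ) (h0 : 0 ≤ a) (hab : a ≤ b) (h1 : b ≤ 1) (c : ℝ) (n : ℕ)
    (v : ℝ → ℝ) (hvb : ∃ C, ∀ s ∈ Set.Icc (0:ℝ) 1, |v s| ≤ C)
    (hv : UpperSemicontinuousOn v (Set.Icc 0 1))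
    (u : Fin n → ℝ → ℝ) (hu : ∀ i, ContinuousOn (u i) (Set.Icc 0 1))
    (hne : (Dset a b c u).Nonempty) :
    ∃ μstar ∈ Dset a b c u,
      (∀ μ ∈ Dset a b c u,
        (∫ s in Set.Icc (0:ℝ) 1, v s ∂μ) ≤ ∫ s in Set.Icc (0:ℝ) 1, v s ∂μstar) ∧
      ∃ S : Finset ℝ, S.card ≤ n + 2 ∧ μstar (↑S)ᶜ = 0 := by
  classical
  obtain ⟨C, hC⟩ := hvb
  have hsub : Icc a b ⊆ Icc (0:ℝ) 1 := Icc_subset_Icc h0 h1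
  -- the compact truncated hypograph
  set T : Set (ℝ × ℝ) := {p | p.1 ∈ Icc a b ∧ p.2 ≤ v p.1} ∩ (Icc a b ×ˢ Icc (-C) C) with hT
  have hTc : IsCompact T :=
    (isCompact_Icc.prod isCompact_Icc).inter_left
      ((upperSemicontinuousOn_iff_isClosed_hypograph isClosed_Icc).1 (hv.mono hsub))
  set Φ : ℝ × ℝ → (Fin n → ℝ) × ℝ × ℝ := fun p => (fun i => u i p.1, p.1, p.2) with hΦ
  have hΦc : ContinuousOn Φ T := by
    refine ContinuousOn.prodMk (continuousOn_pi.2 fun i => ?_) (by fun_prop)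
    exact (hu i).comp continuousOn_fst fun p hp => hsub hp.1.1
  set K := Φ '' T with hKdef
  have hK : IsCompact K := hTc.image_of_continuousOn hΦc
  have hH := aux_isCompact_convexHull hK
  set A : Set ((Fin n → ℝ) × ℝ × ℝ) :=
    convexHull ℝ K ∩ {p | (∀ i, 0 ≤ p.1 i) ∧ p.2.1 = b - c} with hA
  have hAc : IsCompact A := by
    refine hH.inter_right ?_
    refine IsClosed.and ?_ (isClosed_eq (by fun_prop) (by fun_prop))
    simp only [ofPred_forall]
    exact isClosed_iInter fun i => isClosed_le (by fun_prop) (by fun_prop)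
  -- measurability of `v`
  have hvm : ∀ μ : Measure ℝ, AEStronglyMeasurable v (μ.restrict (Icc 0 1)) := by
    intro μ
    have hm := (upperSemicontinuousOn_iff_restrict.2 hv).measurable
    have h : AEMeasurable v ((μ.comap ((↑) : Icc (0:ℝ) 1 → ℝ)).map (↑)) :=
      (MeasurableEmbedding.subtype_coe measurableSet_Icc).aemeasurable_map_iff.2 hm.aemeasurable
    rw [map_comap_subtype_coe measurableSet_Icc] at h
    exact h.aestronglyMeasurable
  -- moments of feasible measures
  have hmom : ∀ μ ∈ Dset a b c u, ∃ p ∈ A, p.2.2 = ∫ s in Icc (0:ℝ) 1, v s ∂μ := by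
    rintro μ ⟨hp, hμ, hui, hcdf⟩
    obtain ⟨hae, hres⟩ := aux_restrict h0 h1 μ hμ
    rw [aux_cdf h0 hab h1 μ hμ] at hcdf
    have hvi : Integrable v μ := by
      refine Integrable.of_bound (by simpa [hres] using hvm μ) C ?_
      filter_upwards [hae] with x hx using hC x (hsub hx)
    have hxi : Integrable (fun x : ℝ => x) μ := by
      refine Integrable.of_bound (by fun_prop) 1 ?_
      filter_upwards [hae] with x hx
      rw [Real.norm_eq_abs, abs_le]
      constructor <;> linarith [hx.1, hx.2]
    have huint : ∀ i, Integrable (u i) μ := by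
      intro i
      have := (hu i).integrableOn_compact (μ := μ) isCompact_Icc
      rwa [IntegrableOn, hres] at this
    have huI : Integrable (fun x => fun i => u i x) μ := Integrable.of_eval huint
    have hmem : (∫ x, ((fun i => u i x, x, v x) : (Fin n → ℝ) × ℝ × ℝ) ∂μ) ∈ convexHull ℝ K := by
      refine (convex_convexHull ℝ K).integral_mem hH.isClosed ?_ (huI.prodMk (hxi.prodMk hvi))
      filter_upwards [hae] with x hx
      refine subset_convexHull ℝ K ⟨(x, v x), ⟨⟨hx, le_rfl⟩, hx, ?_⟩, rfl⟩
      exact abs_le.1 (hC x (hsub hx))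
    rw [integral_pair huI (hxi.prodMk hvi), integral_pair hxi hvi] at hmem
    refine ⟨_, ⟨hmem, ?_, ?_⟩, by rw [hres]⟩
    · intro i
      have := hui i
      rw [hres] at this
      simpa [eval_integral huint] using this
    · show ∫ x, x ∂μ = b - c
      linarith
  have hAne : A.Nonempty := by
    obtain ⟨μ, hμ⟩ := hne
    obtain ⟨p, hp, -⟩ := hmom μ hμ
    exact ⟨p, hp⟩
  obtain ⟨p, hpA, hpmax⟩ := hAc.exists_isMaxOn hAne
    (f := fun p : (Fin n → ℝ) × ℝ × ℝ => p.2.2) (by fun_prop)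
  obtain ⟨ι, _, z, w, hz, hai, hw, hw1, hzp⟩ := eq_pos_convex_span_of_mem_convexHull hpA.1
  have hcard : Fintype.card ι ≤ n + 2 := by
    have := aux_card hz hai hw hw1 ((0, 0, 1) : (Fin n → ℝ) × ℝ × ℝ) (by
      intro ε hε hmem
      rw [hzp] at hmem
      have : p + ε • ((0, 0, 1) : (Fin n → ℝ) × ℝ × ℝ) ∈ A :=
        ⟨hmem, fun i => by simpa using hpA.2.1 i, by simpa using hpA.2.2⟩
      have := hpmax this
      simp at this
      linarith)
    simpa using this
  have hzT : ∀ i, ∃ q ∈ T, Φ q = z i := fun i => hz ⟨i, rfl⟩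
  choose q hqT hqz using hzT
  set μs : Measure ℝ := ∑ i, ENNReal.ofReal (w i) • Measure.dirac (q i).1 with hμs
  have hint : ∀ f : ℝ → ℝ, ∫ x, f x ∂μs = ∑ i, w i * f (q i).1 := by
    intro f
    rw [hμs, integral_finsetSum_measure]
    · refine Finset.sum_congr rfl fun i _ => ?_
      rw [integral_smul_measure, integral_dirac, ENNReal.toReal_ofReal (hw i).le, smul_eq_mul]
    · intro i _
      exact (integrable_dirac (by simp)).smul_measure ENNReal.ofReal_ne_top
  have hmeas : ∀ s : Set ℝ, MeasurableSet s → (∀ i, (q i).1 ∈ s) → μs s = 1 := by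
    intro s hs h
    rw [hμs]
    simp only [Measure.coe_finsetSum, Finset.sum_apply, Measure.smul_apply,
      Measure.dirac_apply' _ hs, smul_eq_mul]
    simp only [indicator_of_mem (h _), Pi.one_apply, mul_one]
    rw [← ENNReal.ofReal_sum_of_nonneg fun i _ => (hw i).le, hw1, ENNReal.ofReal_one]
  have hprob : IsProbabilityMeasure μs := ⟨hmeas _ MeasurableSet.univ fun _ => trivial⟩
  have hμab : μs (Icc a b) = 1 := hmeas _ measurableSet_Icc fun i => (hqT i).1.1
  obtain ⟨hae, hres⟩ := aux_restrict h0 h1 μs hμab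
  refine ⟨μs, ⟨hprob, hμab, ?_, ?_⟩, ?_, Finset.univ.image fun i => (q i).1, ?_, ?_⟩
  · intro i
    rw [hres, hint]
    have h := hpA.2.1 i
    rw [← hzp] at h
    simpa [Prod.fst_sum, ← hqz, hΦ] using h
  · rw [aux_cdf h0 hab h1 μs hμab, hint]
    have h := hpA.2.2
    rw [← hzp] at h
    simp [Prod.fst_sum, Prod.snd_sum, ← hqz, hΦ] at h
    linarith
  · intro μ hμ
    obtain ⟨p', hp', he⟩ := hmom μ hμ
    rw [← he, hres, hint]
    refine (hpmax hp').trans ?_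
    rw [← hzp]
    simp only [Prod.snd_sum, ← hqz, hΦ, Prod.smul_snd, smul_eq_mul]
    exact Finset.sum_le_sum fun i _ => mul_le_mul_of_nonneg_left (hqT i).1.2 (hw i).le
  · exact Finset.card_image_le.trans (by simpa using hcard)
  · rw [prob_compl_eq_zero_iff (Finset.measurableSet _)]
    exact hmeas _ (Finset.measurableSet _) fun i => by simp
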